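/- Let G = N_{3,4}, let f : H → G be a homomorphism from a finite-index subgroup H of G, let m, n, k, j be positive integers with aᵐ, bⁿ, cᵏ, dʲ ∈ H, and let N_f be the associated 4×4 integer exponent matrix. If det(N_f) ≠ 0, then f(aᵐ) ≡ aᵐ, f(bⁿ) ≡ bⁿ, f(cᵏ) ≡ cᵏ, and f(dʲ) ≡ dʲ modulo the commutator subgroup G'; equivalently, N_f is the diagonal matrix diag(m, n, k, j). -/

import Mathlib

/-!
The idea is to compare `f` with the rational Lie algebra of `N_{3,4}`.

Write `x = [a, c]`, `y = [a, d]`, `z = [b, c]`, `w = [b, d]`, `p = [c, d]`, `q = [x, b]`,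
`r = [a, b]`, `s = [y, b]`, `t = [a, y]`. The presentation does not list the relations of class
three; `central_of_relations` derives from it that `p, q, r, s, t` are central, by repeatedly
conjugating the given relations by the generators. Hence triple commutators of powers of the
generators are powers of these central elements, and counting exponents gives seven relations
between `aᵐ, bⁿ, cᵏ, dʲ` (`N34_power_relations`), for instance `[aᵐ, bⁿ]^{k²} = [[aᵐ, cᵏ], cᵏ]ⁿ`
and `[[aᵐ, dʲ], dʲ] = 1`. They hold in `H`, so their images hold for `f(aᵐ), …, f(dʲ)`.

To read off what they say about exponents, `N_{3,4}` is mapped by `LieGrp.ofN34` to the group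
`LieGrp`: an explicit 13-dimensional graded Lie algebra over `ℚ` with the
Baker–Campbell–Hausdorff product. There a relation is a list of polynomial identities in
coordinates, and the degree-one parts of the images of `f(aᵐ), …, f(dʲ)` are the rows of `Nf`.

`LieGrp.rigid` solves these identities. The degree-two parts of the relations for `[aᵐ, bⁿ]` and
`[cᵏ, dʲ]` say that, for the first two rows and for the last two rows, all `2 × 2` minors other
than those in columns `ab` and `cd` vanish. As the determinant is nonzero, Laplace expansion
leaves two configurations: `Nf` is block diagonal or block antidiagonal. The degree-three parts
exclude the second one, and in the first one they kill the off-diagonal entries and determine the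
diagonal entries to be `m, n, k, j`.
-/

/-- The commutator `[x, y] = x⁻¹ y⁻¹ x y`. -/
def cmt {G : Type*} [Group G] (x y : G) : G := x⁻¹ * y⁻¹ * x * y

/-- The defining relators of the Bludov–Gusev group `N_{3,4}` on generators
`a, b, c, d` (indexed by `0, 1, 2, 3`). -/
def N34Rels : Set (FreeGroup (Fin 4)) :=
  let a : FreeGroup (Fin 4) := FreeGroup.of 0
  let b : FreeGroup (Fin 4) := FreeGroup.of 1
  let c : FreeGroup (Fin 4) := FreeGroup.of 2
  let d : FreeGroup (Fin 4) := FreeGroup.of 3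
  {cmt a (cmt a b), cmt (cmt a b) b, cmt a (cmt c d), cmt (cmt a d) d,
   cmt b (cmt b c), cmt b (cmt c d), cmt c (cmt c d), cmt (cmt c d) d,
   cmt a (cmt b c) * cmt (cmt a c) b,
   cmt a (cmt b d) * cmt (cmt a d) b,
   cmt a (cmt a d) * (cmt (cmt b c) c)⁻¹,
   cmt a (cmt a c) * (cmt b (cmt b d))⁻¹,
   cmt (cmt a c) b * (cmt (cmt b d) d)⁻¹,
   cmt (cmt a c) c * (cmt (cmt b d) c)⁻¹,
   cmt (cmt a d) b * (cmt (cmt a d) c)⁻¹,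
   cmt a b * (cmt (cmt a c) c)⁻¹,
   cmt c d * (cmt a (cmt a c))⁻¹}

/-- The Bludov–Gusev group `N_{3,4}`, presented on generators `a, b, c, d`. -/
abbrev N34 : Type := PresentedGroup N34Rels

/-- The generator `a` of `N_{3,4}`. -/
def ga : N34 := PresentedGroup.of 0
/-- The generator `b` of `N_{3,4}`. -/
def gb : N34 := PresentedGroup.of 1
/-- The generator `c` of `N_{3,4}`. -/
def gc : N34 := PresentedGroup.of 2
/-- The generator `d` of `N_{3,4}`. -/
def gd : N34 := PresentedGroup.of 3


/-! ### Conjugation as a right action -/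

section Conj
variable {G : Type*} [Group G]

/-- Conjugation `u ↦ g⁻¹ u g`, the right action written `u ^ g` in group theory. -/
def cj (g : G) : G →* G := (MulAut.conj g⁻¹).toMonoidHom

theorem cj_apply (g u : G) : cj g u = g⁻¹ * u * g := by simp [cj]

theorem cj_mul (g h u : G) : cj (g * h) u = cj h (cj g u) := by
  simp only [cj_apply]; group

theorem cj_eq_self {g u : G} : cj g u = u ↔ Commute g u := by
  rw [cj_apply, mul_assoc, inv_mul_eq_iff_eq_mul, commute_iff_eq, eq_comm]

theorem cj_cj (g h u : G) : cj g (cj h u) = cj (cj g h) (cj g u) := by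
  simp only [cj_apply]; group

theorem cj_of_cmt {u v e : G} (h : cmt u v = e) : cj v u = u * e := by
  rw [← h, cj_apply, cmt]; group

theorem cj_of_cmt_symm {u v e : G} (h : cmt u v = e) : cj u v = v * e⁻¹ := by
  rw [← h, cj_apply, cmt]; group

theorem cj_swap {u v e : G} (h : cj u v = v * e) : cj v u = u * e⁻¹ := by
  have : e = v⁻¹ * cj u v := by rw [h]; group
  rw [this, cj_apply, cj_apply]; group

theorem Commute.cj_iff (g : G) {u v : G} : Commute (cj g u) (cj g v) ↔ Commute u v := by
  refine ⟨fun h => ?_, fun h => h.map (cj g)⟩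
  have := h.map (cj g⁻¹)
  rw [← cj_mul, ← cj_mul, mul_inv_cancel] at this
  simpa [cj_apply] using this

theorem Commute.cancel_left {u v w : G} (h : Commute u v) (h' : Commute u (v * w)) :
    Commute u w := by
  simpa using h.inv_right.mul_right h'

theorem Commute.cancel_right {u v w : G} (h : Commute u w) (h' : Commute u (v * w)) :
    Commute u v := by
  simpa using h'.mul_right h.inv_right

theorem Commute.of_cj {u g h e : G} (he : cj h g = g * e) (hg : Commute u g) (hh : Commute u h) :
    Commute u e := by
  refine hg.cancel_left ?_
  rw [← he, cj_apply]
  exact (hh.inv_right.mul_right hg).mul_right hh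

/-- If `e = [g, h]`, then `g h = h g e`; both sides act on `u`. -/
theorem cj_comm {g h e : G} (he : cj h g = g * e) (u : G) :
    cj h (cj g u) = cj e (cj g (cj h u)) := by
  rw [cj_cj h g, he, cj_mul]

end Conj

/-! ### Centrality of the triple commutators -/

/-- If `a, b, c, d` satisfy the relations of `N_{3,4}` and `p = [c, d]` is central, then
`q = [x, b]`, `r = [a, b]`, `s = [y, b]`, `t = [a, y]` commute with `a, b, c, d` (for `r` the cases
of `a` and `b` are hypotheses). No assumption on the nilpotency class is made.

All steps have the same shape: a known formula `u ^ g = u e` is conjugated by a generator `h`, or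
the two sides of `u ^ (g h) = u ^ (h g [g, h])` are expanded, and the outcome is that two of the
elements involved commute. -/
theorem central_of_relations {G : Type*} [Group G] {a b c d x y z w p q r s t : G}
    (hp : ∀ g, Commute p g)
    (ab : cmt a b = r) (cd : cmt c d = p) (ac : cmt a c = x) (ad : cmt a d = y)
    (bc : cmt b c = z) (bd : cmt b d = w)
    (ra : Commute r a) (rb : Commute r b) (yd' : Commute d y) (zb' : Commute b z)
    (ax : cmt a x = p) (bw : cmt b w = p) (xb : cmt x b = q) (wd : cmt w d = q)
    (xc : cmt x c = r) (wc : cmt w c = r) (yb : cmt y b = s) (yc : cmt y c = s)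
    (zc : cmt z c = t) (ay : cmt a y = t) (az : cmt a z = q⁻¹) (aw : cmt a w = s⁻¹) :
    (Commute q a ∧ Commute q b ∧ Commute q c ∧ Commute q d) ∧
    (Commute r c ∧ Commute r d) ∧
    (Commute s a ∧ Commute s b ∧ Commute s c ∧ Commute s d) ∧
    (Commute t a ∧ Commute t b ∧ Commute t c ∧ Commute t d) := by
  have hpc : ∀ g, cj p g = g := fun g => cj_eq_self.2 (hp g)
  have hpi : ∀ g, cj p⁻¹ g = g := fun g => cj_eq_self.2 (hp g).inv_left
  have cjp : ∀ g, cj g p = p := fun g => cj_eq_self.2 (hp g).symm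
  have cjs : ∀ g : G, cj g g = g := fun g => cj_eq_self.2 (Commute.refl g)
  have pmul : ∀ g h : G, g * p⁻¹ * h = g * h * p⁻¹ := fun g h => by
    rw [mul_assoc, ((hp h).inv_left).eq, mul_assoc]
  -- the action of the generators by conjugation: `ab` reads `a ^ b = a r`, `xa` reads
  -- `x ^ a = x p⁻¹`, and so on
  have xa := cj_of_cmt_symm ax
  have wb := cj_of_cmt_symm bw
  have ya := cj_of_cmt_symm ay
  have za := cj_of_cmt_symm az
  have wa := cj_of_cmt_symm aw
  have ba := cj_of_cmt_symm ab
  have dc := cj_of_cmt_symm cd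
  have ca := cj_of_cmt_symm ac
  have da := cj_of_cmt_symm ad
  have cb := cj_of_cmt_symm bc
  have db := cj_of_cmt_symm bd
  rw [inv_inv] at za wa
  replace ab := cj_of_cmt ab
  replace cd := cj_of_cmt cd
  replace ac := cj_of_cmt ac
  replace ad := cj_of_cmt ad
  replace bc := cj_of_cmt bc
  replace bd := cj_of_cmt bd
  replace xb := cj_of_cmt xb
  replace xc := cj_of_cmt xc
  replace wc := cj_of_cmt wc
  replace wd := cj_of_cmt wd
  replace yb := cj_of_cmt yb
  replace yc := cj_of_cmt yc
  replace zc := cj_of_cmt zc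
  have yd := cj_eq_self.2 yd'
  have zb := cj_eq_self.2 zb'
  have ra' := cj_eq_self.2 ra.symm
  have rb' := cj_eq_self.2 rb.symm
  have cdu : ∀ u, cj d (cj c u) = cj c (cj d u) := fun u => by
    rw [cj_comm cd, hpc]
  have rx : Commute x r := by
    have h := congrArg (cj c) xa
    rw [cj_cj, ac] at h
    simp only [xc, cj_mul, map_mul, map_inv, xa, cjp, cjs, ra', pmul] at h
    rw [← cj_eq_self]
    simpa [mul_assoc] using h
  have rq : Commute r q := Commute.of_cj xb rx.symm rb
  have qa : Commute a q := by
    have h := congrArg (cj a) xb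
    rw [cj_cj, ba, cj_mul, map_mul, xa, map_mul, xb, map_inv, cjp, pmul, map_mul, map_mul,
      cj_eq_self.2 rx.symm.inv_left, cj_eq_self.2 rq.inv_left, map_inv, cjp] at h
    rw [← cj_eq_self]
    simpa [mul_assoc] using h.symm
  have qbw : Commute (b * w) q := by
    have h := congrArg (cj d) wb
    rw [cj_cj, bd] at h
    simp only [wd, cj_mul, map_mul, map_inv, wb, cjp, cjs, pmul] at h
    rw [← cj_eq_self, cj_mul]
    simpa [mul_assoc] using h
  have zwr : Commute z (w * r) := by
    have h := congrArg (cj c) wb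
    rw [cj_cj, bc] at h
    simp only [wc, cj_mul, map_mul, map_inv, wb, rb', cjp, pmul] at h
    rw [← cj_eq_self, map_mul]
    exact mul_right_cancel h
  have zd : cj d z = r * z := by
    have h := cdu b
    rw [bc, bd, map_mul, map_mul, bd, bc, wc, mul_assoc, mul_assoc, mul_right_inj, zwr.eq,
      mul_assoc, mul_right_inj] at h
    exact h
  have wrz : Commute w (r * z) := by
    have h := congrArg (cj d) zb
    rw [cj_cj, bd, zd, cj_mul, map_mul, rb', zb] at h
    exact cj_eq_self.1 h
  have rzw : Commute r (z * w) := by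
    have h := zwr.eq
    rw [commute_iff_eq, mul_assoc, h, ← mul_assoc, ← wrz.eq, mul_assoc]
  have sd : Commute d s := by
    have h := congrArg (cj c) yd
    rw [cj_cj, dc, yc, cj_mul, hpi, map_mul, yd, mul_right_inj] at h
    exact cj_eq_self.1 h
  have sd' := cj_eq_self.2 sd
  have ysw : Commute w (y * s) := by
    have h := congrArg (cj b) yd
    rw [cj_cj, db, yb, cj_mul, map_mul, yd, sd'] at h
    simpa using (cj_eq_self.1 h)
  have yw : Commute w y := by
    have h : Commute (cj b (w * p)) (cj b y) := by
      rwa [map_mul, wb, cjp, yb, inv_mul_cancel_right]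
    have h2 := ((Commute.cj_iff b).1 h).symm
    exact ((hp y).symm.cancel_right h2).symm
  have sw : Commute w s := yw.cancel_left ysw
  have qs : Commute q s := by
    have h := qbw.map (cj a)
    rw [map_mul, ba, wa, cj_eq_self.2 qa, ((rb.inv_left).eq).symm] at h
    have h2 : Commute q (r⁻¹ * ((b * w) * s)) := by
      simpa [mul_assoc] using h.symm
    exact qbw.symm.cancel_left (rq.symm.inv_right.cancel_left h2)
  have qys : Commute (y * s) q := by
    have h := ysw.symm.map (cj d)
    rw [map_mul, yd, sd', wd] at h
    exact ysw.symm.cancel_left h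
  have qy : Commute q y := qs.cancel_right qys.symm
  have ys : Commute y s := by
    have h := congrArg (cj a) wd
    have h0 : cj y⁻¹ (w * q * s) = w * q * s := by
      rw [cj_cj, da] at h
      simp only [wa, cj_mul, map_mul, wd, sd', cj_eq_self.2 qa] at h
      rw [map_mul, map_mul, h, mul_assoc, mul_assoc, qs.eq]
    have h2 := cj_eq_self.1 h0
    rw [mul_assoc] at h2
    rw [Commute.inv_left_iff] at h2
    exact qy.symm.cancel_left (yw.symm.cancel_left h2)
  have tq : Commute q t := by
    have h := qy.map (cj a)
    rw [cj_eq_self.2 qa, ya] at h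
    simpa using qy.cancel_left h
  have rys : Commute (y * s) r := by
    have h := yw.symm.map (cj c)
    rw [yc, wc] at h
    exact ysw.symm.cancel_left h
  have rs : Commute r s := by
    have h := rys.map (cj b)
    rw [map_mul, yb, rb'] at h
    have h2 : Commute (cj b r) (cj b s) := by
      rw [rb']; exact rys.symm.cancel_left h.symm
    exact (Commute.cj_iff b).1 h2
  have ry : Commute r y := rs.cancel_right rys.symm
  have rt : Commute r t := by
    have h := ry.map (cj a)
    rw [ra', ya] at h
    simpa using ry.cancel_left h
  have aw' := cj_swap wa
  have rdw : cj d r = cj w r := by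
    have h := congrArg (cj d) ab
    have h1 : Commute y (cj w r) := by
      have := ry.map (cj w); rw [cj_eq_self.2 yw] at this; exact this.symm
    have h2 : Commute s (cj w r) := by
      have := rs.map (cj w); rw [cj_eq_self.2 sw] at this; exact this.symm
    rw [cj_cj, bd] at h
    simp only [ad, cj_mul, map_mul, ab, yb, cj_eq_self.2 yw, cj_eq_self.2 sw,
      aw'] at h
    rw [mul_assoc, mul_assoc, mul_assoc, mul_right_inj, ((h1.mul_left h2).eq).symm, ys.eq,
      mul_assoc s, inv_mul_cancel_left,
      mul_right_inj] at h
    exact h.symm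
  have rw' : Commute w r := by
    have h := congrArg (cj b) rdw
    rw [cj_cj, cj_cj b w, db, wb, rb', cj_mul, cj_mul, hpi, rdw, ← cj_mul, mul_inv_cancel] at h
    rw [← cj_eq_self, ← h, cj_apply]; simp
  have rd : Commute d r := by rw [← cj_eq_self, rdw, cj_eq_self]; exact rw'
  have rd' := cj_eq_self.2 rd
  have rz : Commute r z := rw'.symm.cancel_right rzw
  have zw : Commute z w := rz.symm.cancel_right zwr
  have sb : Commute b s := by
    have h := congrArg (cj b) wa
    rw [cj_cj, ab, wb, cj_mul, map_mul, wa, map_mul, map_inv, cjp, map_mul, map_mul, wb,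
      cj_eq_self.2 rw'.symm, cj_eq_self.2 rs, map_inv, cjp, pmul] at h
    rw [← cj_eq_self]
    simpa using h.symm
  have qb : Commute b q := by
    have h := congrArg (cj b) za
    rw [cj_cj, ab, zb, cj_mul, za, map_mul, map_mul, zb, cj_eq_self.2 rz, cj_eq_self.2 rq] at h
    rw [← cj_eq_self]
    simpa using h.symm
  have qw : Commute q w := qb.symm.cancel_left qbw.symm
  have qc : Commute c q := by
    have h := cdu w
    rw [wc, wd, map_mul, map_mul, wd, wc, rd', mul_assoc, mul_assoc, mul_right_inj, ← rq.eq,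
      mul_right_inj] at h
    exact cj_eq_self.1 h.symm
  have qc' := cj_eq_self.2 qc
  have qz : Commute q z := Commute.of_cj bc qb.symm qc.symm
  have qx : Commute q x := Commute.of_cj ac qa.symm qc.symm
  have bcu : ∀ u, cj c (cj b u) = cj z (cj b (cj c u)) := cj_comm bc
  have acu : ∀ u, cj c (cj a u) = cj x (cj a (cj c u)) := cj_comm ac
  have adu : ∀ u, cj d (cj a u) = cj y (cj a (cj d u)) := cj_comm ad
  have bdu : ∀ u, cj d (cj b u) = cj w (cj b (cj d u)) := cj_comm bd
  have xz : Commute z x := by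
    have h := bcu x
    simp only [xb, xc, map_mul, rb', qc', cj_eq_self.2 rz.symm, cj_eq_self.2 qz.symm] at h
    rw [mul_assoc, mul_assoc, rq.eq, mul_left_inj] at h
    exact cj_eq_self.1 h.symm
  have az' := cj_swap za
  have rc : Commute c r := by
    have h := congrArg (cj c) ab
    rw [cj_cj, bc] at h
    simp only [ac, cj_mul, map_mul, ab, xb, az', cj_eq_self.2 rz.symm,
      cj_eq_self.2 qz.symm, cj_eq_self.2 xz] at h
    rw [mul_assoc, mul_assoc, mul_assoc, mul_right_inj, ← mul_assoc r,
      ← (rq.symm.mul_right qx).eq, inv_mul_cancel_left, ← rx.eq, mul_right_inj] at h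
    exact cj_eq_self.1 h.symm
  have rc' := cj_eq_self.2 rc
  have tax : Commute (a * x) t := by
    have h := acu z
    rw [za, zc, map_mul, map_mul, map_mul, za, zc, qc', map_mul, cj_eq_self.2 xz.symm,
      cj_eq_self.2 qx.symm, mul_assoc, mul_assoc, mul_right_inj, ← tq.eq, mul_right_inj,
      ← cj_mul] at h
    exact cj_eq_self.1 h.symm
  have tbz : Commute (b * z) t := by
    have h := congrArg (cj c) zb
    rw [cj_cj, bc, zc, cj_mul, map_mul, zb, map_mul, cj_apply z z, inv_mul_cancel, one_mul,
      mul_right_inj, ← cj_mul] at h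
    exact cj_eq_self.1 h
  have td : Commute d t := by
    have h := cdu z
    rw [zc, zd, map_mul, map_mul, zd, rc', zc, ← mul_assoc, mul_right_inj] at h
    exact cj_eq_self.1 h
  have ty : Commute y t := by
    have h := congrArg (cj a) yd
    rw [cj_cj, da, ya, cj_mul, map_mul, yd, map_inv, cj_eq_self.2 td] at h
    have h2 := cj_eq_self.1 h
    rw [Commute.inv_left_iff] at h2
    simpa using (Commute.refl y).cancel_left h2
  have xd : cj d x = y⁻¹ * x * y * s := by
    have h := cdu a
    rw [ac, ad, map_mul, map_mul, ad, ac, yc, mul_assoc, mul_assoc, mul_right_inj] at h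
    rw [mul_assoc, mul_assoc, ← h, inv_mul_cancel_left]
  -- the conjugate of `q` by `d` is carried along until it is found to equal `q` itself
  obtain ⟨q', hq'⟩ : ∃ q', cj d q = q' := ⟨_, rfl⟩
  have q'y : Commute q' y := by
    have h := qy.map (cj d); rwa [hq', yd] at h
  have q's : Commute q' s := by
    have h := qs.map (cj d); rwa [hq', sd'] at h
  have q'a : Commute q' a := by
    have h := qa.symm.map (cj d); rw [hq', ad] at h
    exact q'y.cancel_right h
  have q'x : Commute q' x := by
    have h := qx.map (cj d); rw [hq', xd] at h
    exact q'y.inv_right.cancel_left (q'y.cancel_right (q's.cancel_right h))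
  have q'c : Commute q' c := by
    have h := cdu q
    rw [qc', hq'] at h
    exact (cj_eq_self.1 h.symm).symm
  have q'r : Commute q' r := by
    have h := rq.symm.map (cj d); rwa [hq', rd'] at h
  have q'z : Commute q' z := by
    have h := qz.map (cj d); rw [hq', zd] at h
    exact q'r.cancel_left h
  have q'bw : Commute q' (b * w) := by
    have h := qb.symm.map (cj d); rwa [hq', bd] at h
  have qq' : Commute q q' := by
    have h := congrArg (cj d) xb
    rw [cj_cj, bd, map_mul, hq', xd] at h
    have hx : Commute q (y⁻¹ * x * y * s) :=
      ((qy.inv_right.mul_right qx).mul_right qy).mul_right qs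
    exact Commute.of_cj h hx (qb.symm.mul_right qw)
  have q'w : Commute q' w := by
    have h := qw.map (cj d); rw [hq', wd] at h
    exact qq'.symm.cancel_right h
  have q'b : Commute q' b := q'w.cancel_right q'bw
  have q't : Commute q' t := Commute.of_cj zc q'z q'c
  have zy : cj y z = z * (q' * q⁻¹) := by
    have h := adu z
    simp only [za, zd, map_mul, hq', ra', cj_eq_self.2 ry.symm, cj_eq_self.2 qy.symm] at h
    rw [mul_assoc, mul_right_inj] at h
    rw [← mul_assoc, h, mul_inv_cancel_right]
  have sc : cj c s = s * (q * q'⁻¹) := by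
    have h := bdu x
    have h2 := congrArg (cj c) aw'
    have hr : Commute r (cj w x) := by
      have := rx.symm.map (cj w); rwa [cj_eq_self.2 rw'] at this
    rw [cj_cj, wc] at h2
    simp only [ac, cj_mul, map_mul, aw', map_inv, cj_eq_self.2 ra,
      cj_eq_self.2 rs, cj_eq_self.2 hr] at h2
    rw [mul_assoc, mul_assoc, mul_right_inj] at h2
    have h3 : cj w x = s * (x * (cj c s)⁻¹) := by rw [← h2, mul_inv_cancel_left]
    simp only [xb, xd, map_mul, hq', map_inv, yb, cj_eq_self.2 sb, cj_eq_self.2 yw,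
      cj_eq_self.2 sw, cj_eq_self.2 qw.symm, h3] at h
    have e1 : (y * s)⁻¹ * (s * (x * (cj c s)⁻¹) * q) = y⁻¹ * x * ((cj c s)⁻¹ * q) := by
      rw [ys.eq]; group
    have e2 : s * (q * q'⁻¹) * (y * (s * q')) = q * (y * (s * s)) := by
      have := (q'y.inv_left.mul_right q's.inv_left).eq
      have h5 : Commute s (q * (y * s)) := qs.symm.mul_right (ys.symm.mul_right (Commute.refl s))
      calc s * (q * q'⁻¹) * (y * (s * q')) = s * (q * (q'⁻¹ * (y * s) * q')) := by group
        _ = s * (q * (y * s)) := by rw [this, inv_mul_cancel_right]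
        _ = _ := by rw [h5.eq]; group
    rw [e1] at h
    simp only [mul_assoc, mul_right_inj] at h
    rw [eq_inv_mul_iff_mul_eq, ← e2] at h
    exact mul_right_cancel h
  have cqq : ∀ {g}, Commute q g → Commute q' g → cj g (q * q'⁻¹) = q * q'⁻¹ := fun h h' =>
    cj_eq_self.2 (h.symm.mul_right h'.symm.inv_right)
  have sz : Commute z s := by
    have h := bcu s
    rw [cj_eq_self.2 sb, sc, map_mul, map_mul, cj_eq_self.2 sb, cqq qb.symm q'b, cqq qz q'z,
      mul_left_inj] at h
    exact cj_eq_self.1 h.symm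
  have st : Commute s t := by
    have h := sz.symm.map (cj c)
    rw [sc, zc] at h
    have hz : Commute (s * (q * q'⁻¹)) z :=
      sz.symm.mul_left (qz.mul_left q'z.inv_left)
    have h2 := (hz.cancel_left h).symm
    exact ((tq.mul_left q't.inv_left).symm.cancel_right h2).symm
  have tz : Commute z t := by
    have yz := cj_swap zy
    have h := congrArg (cj z) ya
    rw [cj_cj, az'] at h
    simp only [yz, mul_inv_rev, inv_inv, cj_mul, map_mul, map_inv, ya, cj_eq_self.2 qa,
      cj_eq_self.2 q'a.symm, cj_eq_self.2 qy.inv_left, cj_eq_self.2 tq.inv_left,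
      cj_eq_self.2 qq'.inv_left, cj_eq_self.2 (Commute.refl q).inv_left] at h
    rw [mul_assoc, mul_assoc, (tq.mul_left q't.inv_left).symm.inv_left.eq, mul_right_inj,
      mul_right_inj] at h
    exact cj_eq_self.1 (inv_injective h.symm)
  have tb : Commute b t := (tz.symm.cancel_right tbz.symm).symm
  have sa : Commute a s := by
    have h := congrArg (cj a) yb
    rw [cj_cj, ba] at h
    simp only [cj_mul, map_mul, ya, yb, map_inv, cj_eq_self.2 tb, cj_eq_self.2 ry.inv_left,
      cj_eq_self.2 rs.inv_left, cj_eq_self.2 rt.inv_left] at h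
    rw [mul_assoc, mul_assoc, st.inv_right.eq, mul_right_inj, mul_right_inj] at h
    exact cj_eq_self.1 h.symm
  have sx : Commute x s := by
    have h := acu s
    rw [cj_eq_self.2 sa, sc, map_mul, map_mul, cj_eq_self.2 sa, cqq qa.symm q'a, cqq qx q'x,
      mul_left_inj] at h
    exact cj_eq_self.1 h.symm
  have sc1 : cj c s = s := by
    have h := cdu x
    simp only [xc, xd, map_mul, map_inv, yc, rd'] at h
    have e1 : (y * s)⁻¹ * (x * r) * (y * s) = y⁻¹ * x * y * r := by
      calc (y * s)⁻¹ * (x * r) * (y * s) = y⁻¹ * (s⁻¹ * ((x * r) * s)) * y := by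
            rw [ys.eq]; group
        _ = y⁻¹ * x * (r * y) := by
            rw [(sx.mul_left rs).eq, inv_mul_cancel_left]; group
        _ = _ := by rw [ry.eq]; group
    rw [e1, mul_assoc, mul_assoc _ r, mul_right_inj, ← rs.eq, mul_right_inj] at h
    exact h.symm
  have hqq : q' = q := by
    rw [sc1, left_eq_mul, mul_inv_eq_one] at sc
    exact sc.symm
  rw [hqq] at hq'
  have xyt : Commute x (y * t⁻¹) := by
    have h := adu x
    simp only [xa, xd, map_mul, map_inv, ya, cjp, cjs, cj_eq_self.2 ty, cj_eq_self.2 sa,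
      cj_eq_self.2 ys, ← mul_assoc, pmul] at h
    rw [mul_left_inj, mul_left_inj] at h
    refine (Commute.cj_iff y).1 (Commute.symm ?_)
    rw [map_mul, map_inv, cjs, cj_eq_self.2 ty, ← cj_eq_self, cj_apply (y * t⁻¹), cj_apply y,
      ← mul_assoc]
    rw [cj_apply] at h
    simpa only [← mul_assoc] using h.symm
  have xy : Commute x y := by
    have h : Commute (cj a (x * p)) (cj a y) := by
      rwa [map_mul, xa, cjp, ya, inv_mul_cancel_right]
    exact ((hp y).symm.cancel_right ((Commute.cj_iff a).1 h).symm).symm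
  have xt : Commute x t := by simpa using xy.cancel_left xyt
  have ta : Commute t a := xt.symm.cancel_right tax.symm
  have tc : Commute c t := by
    have h := congrArg (cj c) ya
    rw [cj_cj, ac] at h
    simp only [cj_mul, map_mul, map_inv, yc, ya, cj_eq_self.2 sa, cj_eq_self.2 xy,
      cj_eq_self.2 xt, cj_eq_self.2 sx] at h
    rw [mul_assoc, mul_assoc, ← st.inv_right.eq, mul_right_inj, mul_right_inj] at h
    exact cj_eq_self.1 (inv_injective h.symm)
  exact ⟨⟨qa.symm, qb.symm, qc.symm, (cj_eq_self.1 hq').symm⟩, ⟨rc.symm, rd.symm⟩,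
    ⟨sa.symm, sb.symm, (cj_eq_self.1 sc1).symm, sd.symm⟩, ta, tb.symm, tc.symm, td.symm⟩

/-! ### Commutators of powers -/

section Powers
variable {G : Type*} [Group G]

theorem cmt_eq_mul_cj (u v : G) : cmt u v = u⁻¹ * cj v u := by
  rw [cj_apply, cmt]; group

theorem map_cmt {K : Type*} [Group K] (φ : G →* K) (u v : G) :
    φ (cmt u v) = cmt (φ u) (φ v) := by
  simp [cmt]

theorem cmt_inv (u v : G) : (cmt u v)⁻¹ = cmt v u := by
  simp only [cmt]; group

theorem cmt_eq_one_iff {u v : G} : cmt u v = 1 ↔ Commute u v := by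
  rw [cmt_eq_mul_cj, inv_mul_eq_one, eq_comm, cj_eq_self]
  exact ⟨Commute.symm, Commute.symm⟩

theorem cmt_pow_left {u v : G} (h : Commute u (cmt u v)) (m : ℕ) :
    cmt (u ^ m) v = cmt u v ^ m := by
  rw [cmt_eq_mul_cj, map_pow, cj_of_cmt rfl, h.mul_pow, inv_mul_cancel_left]

theorem cmt_pow_right {u v : G} (h : Commute v (cmt u v)) (n : ℕ) :
    cmt u (v ^ n) = cmt u v ^ n := by
  rw [← cmt_inv v u] at h ⊢
  rw [← cmt_inv, cmt_pow_left (by simpa using h), inv_pow]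

theorem cmt_pow_pow {u v : G} (hu : Commute u (cmt u v)) (hv : Commute v (cmt u v)) (m n : ℕ) :
    cmt (u ^ m) (v ^ n) = cmt u v ^ (m * n) := by
  have h : cmt (u ^ m) v = cmt u v ^ m := cmt_pow_left hu m
  rw [cmt_pow_right (by rw [h]; exact hv.pow_right m), h, pow_mul]

/-- If `[[u, v], u]` and `[[u, v], v]` are central, then `[u ^ m, v ^ n]` agrees with
`[u, v] ^ (m * n)` modulo the center: apply `cmt_pow_pow` in the quotient by the center. -/
theorem cmt_pow_pow_mod_center {u v : G} (hu : cmt u (cmt u v) ∈ Subgroup.center G)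
    (hv : cmt (cmt u v) v ∈ Subgroup.center G) (m n : ℕ) :
    ∃ ζ ∈ Subgroup.center G, cmt (u ^ m) (v ^ n) = cmt u v ^ (m * n) * ζ := by
  let π := QuotientGroup.mk' (Subgroup.center G)
  have hπ : ∀ g ∈ Subgroup.center G, π g = 1 := fun g hg => (QuotientGroup.eq_one_iff g).2 hg
  have h : cmt (π u ^ m) (π v ^ n) = cmt (π u) (π v) ^ (m * n) := by
    refine cmt_pow_pow ?_ ?_ m n
    · rw [← cmt_eq_one_iff, ← map_cmt, ← map_cmt, hπ _ hu]
    · refine Commute.symm ?_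
      rw [← cmt_eq_one_iff, ← map_cmt, ← map_cmt, hπ _ hv]
  rw [← map_pow, ← map_pow, ← map_cmt, ← map_cmt, ← map_pow] at h
  refine ⟨(cmt u v ^ (m * n))⁻¹ * cmt (u ^ m) (v ^ n), QuotientGroup.eq.1 h.symm, ?_⟩
  rw [mul_inv_cancel_left]

theorem cmt_mul_center_left {u v ζ : G} (hζ : ζ ∈ Subgroup.center G) :
    cmt (u * ζ) v = cmt u v := by
  have h : cj v ζ = ζ := cj_eq_self.2 (Subgroup.mem_center_iff.1 hζ v)
  have h2 : Commute (u⁻¹ * cj v u) ζ := Subgroup.mem_center_iff.1 hζ _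
  rw [cmt_eq_mul_cj, cmt_eq_mul_cj, map_mul, h, mul_inv_rev, mul_assoc, ← mul_assoc u⁻¹, h2.eq,
    inv_mul_cancel_left]

theorem cmt_pow_mul_center {e g ζ : G} (h : cmt e g ∈ Subgroup.center G)
    (hζ : ζ ∈ Subgroup.center G) (i l : ℕ) : cmt (e ^ i * ζ) (g ^ l) = cmt e g ^ (i * l) := by
  rw [cmt_mul_center_left hζ]
  exact cmt_pow_pow (Subgroup.mem_center_iff.1 h e) (Subgroup.mem_center_iff.1 h g) i l

theorem cmt_pow_mul_center_right {e g ζ : G} (h : cmt g e ∈ Subgroup.center G)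
    (hζ : ζ ∈ Subgroup.center G) (i l : ℕ) : cmt (g ^ l) (e ^ i * ζ) = cmt g e ^ (i * l) := by
  rw [← cmt_inv, cmt_pow_mul_center (by rw [← cmt_inv]; exact inv_mem h) hζ, ← cmt_inv g e,
    inv_pow, inv_inv]

end Powers

/-! ### The center of `N_{3,4}` and relations between powers of the generators -/

/-- A homomorphism from the free group kills the relators of `N_{3,4}` if and only if the images
of the generators satisfy the defining relations. -/
theorem relations_iff {K : Type*} [Group K] (φ : FreeGroup (Fin 4) →* K) {A B C D : K}
    (hA : φ (FreeGroup.of 0) = A) (hB : φ (FreeGroup.of 1) = B) (hC : φ (FreeGroup.of 2) = C)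
    (hD : φ (FreeGroup.of 3) = D) :
    (∀ u ∈ N34Rels, φ u = 1) ↔
      cmt A (cmt A B) = 1 ∧ cmt (cmt A B) B = 1 ∧ cmt A (cmt C D) = 1 ∧ cmt (cmt A D) D = 1 ∧
      cmt B (cmt B C) = 1 ∧ cmt B (cmt C D) = 1 ∧ cmt C (cmt C D) = 1 ∧ cmt (cmt C D) D = 1 ∧
      cmt A (cmt B C) * cmt (cmt A C) B = 1 ∧ cmt A (cmt B D) * cmt (cmt A D) B = 1 ∧
      cmt A (cmt A D) = cmt (cmt B C) C ∧ cmt A (cmt A C) = cmt B (cmt B D) ∧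
      cmt (cmt A C) B = cmt (cmt B D) D ∧ cmt (cmt A C) C = cmt (cmt B D) C ∧
      cmt (cmt A D) B = cmt (cmt A D) C ∧ cmt A B = cmt (cmt A C) C ∧
      cmt C D = cmt A (cmt A C) := by
  simp only [N34Rels, Set.mem_insert_iff, Set.mem_singleton_iff, forall_eq_or_imp, forall_eq,
    map_mul, map_inv, map_cmt, hA, hB, hC, hD, mul_inv_eq_one]

/-- Commutators of the generators that are central in `N_{3,4}`, together with some of the
defining relations. -/
theorem N34_center :
    (cmt ga gb ∈ Subgroup.center N34 ∧ cmt gc gd ∈ Subgroup.center N34 ∧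
      cmt (cmt ga gc) gb ∈ Subgroup.center N34 ∧ cmt (cmt ga gd) gb ∈ Subgroup.center N34 ∧
      cmt ga (cmt ga gd) ∈ Subgroup.center N34) ∧
    (cmt (cmt ga gd) gd = 1 ∧ cmt gb (cmt gb gc) = 1) ∧
    cmt ga (cmt ga gd) = cmt (cmt gb gc) gc ∧
    cmt ga (cmt ga gc) = cmt gb (cmt gb gd) ∧
    cmt (cmt ga gc) gb = cmt (cmt gb gd) gd ∧
    cmt (cmt ga gc) gc = cmt (cmt gb gd) gc ∧
    cmt ga gb = cmt (cmt ga gc) gc ∧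
    cmt gc gd = cmt ga (cmt ga gc) := by
  obtain ⟨r1, r2, r3, r4, r5, r6, r7, r8, r9, r10, r11, r12, r13, r14, r15, r16, r17⟩ :=
    (relations_iff (PresentedGroup.mk N34Rels) (A := ga) (B := gb) (C := gc) (D := gd)
      rfl rfl rfl rfl).1 fun u hu => PresentedGroup.one_of_mem hu
  have hgen : ∀ {g : N34}, Commute g ga → Commute g gb → Commute g gc → Commute g gd →
      g ∈ Subgroup.center N34 := by
    intro g ha hb hc hd
    have h : Subgroup.closure (Set.range (PresentedGroup.of (rels := N34Rels))) ≤
        Subgroup.centralizer {g} := by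
      rw [Subgroup.closure_le]
      rintro _ ⟨i, rfl⟩
      rw [SetLike.mem_coe, Subgroup.mem_centralizer_singleton_iff]
      fin_cases i
      · exact ha.eq.symm
      · exact hb.eq.symm
      · exact hc.eq.symm
      · exact hd.eq.symm
    rw [PresentedGroup.closure_range_of] at h
    refine Subgroup.mem_center_iff.2 fun u => ?_
    exact Subgroup.mem_centralizer_singleton_iff.1 (h (Subgroup.mem_top u))
  rw [cmt_eq_one_iff] at r1 r2 r3 r6 r7 r8
  have hp : cmt gc gd ∈ Subgroup.center N34 := hgen r3.symm r6.symm r7.symm r8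
  obtain ⟨⟨qa, qb, qc, qd⟩, ⟨rc, rd⟩, ⟨sa, sb, sc, sd⟩, ta, tb, tc, td⟩ :=
    central_of_relations (G := N34) (a := ga) (b := gb) (c := gc) (d := gd)
      (fun g => (Subgroup.mem_center_iff.1 hp g).symm) rfl rfl rfl rfl rfl rfl r1.symm r2
      (cmt_eq_one_iff.1 r4).symm (cmt_eq_one_iff.1 r5) r17.symm (r12.symm.trans r17.symm)
      rfl r13.symm r16.symm (r14.symm.trans r16.symm) rfl r15.symm r11.symm rfl
      (eq_inv_of_mul_eq_one_left r9) (eq_inv_of_mul_eq_one_left r10)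
  exact ⟨⟨hgen r1.symm r2 rc rd, hp, hgen qa qb qc qd, hgen sa sb sc sd, hgen ta tb tc td⟩,
    ⟨r4, r5⟩, r11, r12, r13, r14, r16, r17⟩

/-- Relations between powers of the generators: each side is a power of one of the central
elements `r = [a, b]`, `p = [c, d]`, `t = [a, [a, d]]`, so they follow by counting exponents. -/
theorem N34_power_relations (m n k j : ℕ) :
    cmt (ga ^ m) (gb ^ n) ^ (k * k) = cmt (cmt (ga ^ m) (gc ^ k)) (gc ^ k) ^ n ∧
    cmt (gc ^ k) (gd ^ j) ^ (m * m) = cmt (ga ^ m) (cmt (ga ^ m) (gc ^ k)) ^ j ∧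
    cmt (cmt (ga ^ m) (gd ^ j)) (gd ^ j) = 1 ∧
    cmt (gb ^ n) (cmt (gb ^ n) (gc ^ k)) = 1 ∧
    cmt (cmt (ga ^ m) (gc ^ k)) (gc ^ k) ^ (n * j) =
      cmt (cmt (gb ^ n) (gd ^ j)) (gc ^ k) ^ (m * k) ∧
    cmt (ga ^ m) (cmt (ga ^ m) (gc ^ k)) ^ (n * n * j) =
      cmt (gb ^ n) (cmt (gb ^ n) (gd ^ j)) ^ (m * m * k) ∧
    cmt (ga ^ m) (cmt (ga ^ m) (gd ^ j)) ^ (n * k * k) =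
      cmt (cmt (gb ^ n) (gc ^ k)) (gc ^ k) ^ (m * m * j) := by
  obtain ⟨⟨hr, hp, hq, hs, ht⟩, ⟨yd, bz⟩, et, ep, eq, er, er', ep'⟩ := N34_center
  have one := (Subgroup.center N34).one_mem
  obtain ⟨ζx, hx, ex⟩ := cmt_pow_pow_mod_center (u := ga) (v := gc) (ep' ▸ hp) (er' ▸ hr) m k
  obtain ⟨ζy, hy, ey⟩ := cmt_pow_pow_mod_center (u := ga) (v := gd) ht (by rwa [yd]) m j
  obtain ⟨ζz, hz, ez⟩ := cmt_pow_pow_mod_center (u := gb) (v := gc) (by rwa [bz]) (et ▸ ht) n k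
  obtain ⟨ζw, hw, ew⟩ := cmt_pow_pow_mod_center (u := gb) (v := gd) (ep ▸ ep' ▸ hp) (eq ▸ hq) n j
  have cen : ∀ {g u : N34}, g ∈ Subgroup.center N34 → Commute u g := fun h =>
    Subgroup.mem_center_iff.1 h _
  rw [ex, ey, ez, ew, cmt_pow_pow (cen hr) (cen hr), cmt_pow_pow (cen hp) (cen hp),
    cmt_pow_mul_center (er' ▸ hr) hx, cmt_pow_mul_center_right (ep' ▸ hp) hx,
    cmt_pow_mul_center (by rwa [yd]) hy, cmt_pow_mul_center_right (by rwa [bz]) hz,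
    cmt_pow_mul_center (er ▸ er' ▸ hr) hw, cmt_pow_mul_center_right (ep ▸ ep' ▸ hp) hw,
    cmt_pow_mul_center_right ht hy, cmt_pow_mul_center (et ▸ ht) hz, yd, bz, ← er, ← er', ← ep,
    ← ep', ← et]
  simp only [← pow_mul, one_pow, true_and]
  refine ⟨?_, ?_, ?_, ?_, ?_⟩ <;> congr 1 <;> ring

/-! ### The Baker–Campbell–Hausdorff group of the Lie algebra of `N_{3,4}` -/

/-- The rational Lie algebra of `N_{3,4}`, with basis `a, b, c, d` in degree one,
`x = [a, c]`, `y = [a, d]`, `z = [b, c]`, `w = [b, d]` in degree two and `p, q, r, s, t` in degree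
three, where moreover `[a, b] = r` and `[c, d] = p`. It is used through the group structure that
the Baker–Campbell–Hausdorff formula puts on it. -/
@[ext]
structure LieGrp where
  a : ℚ
  b : ℚ
  c : ℚ
  d : ℚ
  x : ℚ
  y : ℚ
  z : ℚ
  w : ℚ
  p : ℚ
  q : ℚ
  r : ℚ
  s : ℚ
  t : ℚ

namespace LieGrp

/-- The Lie bracket; the brackets of degree three are `[x, a] = [w, b] = -p`,
`[x, b] = [z, a] = [w, d] = q`, `[x, c] = [w, c] = [z, d] = r`,
`[x, d] = [y, b] = [y, c] = [w, a] = s` and `[z, c] = -[y, a] = t`. -/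
def br (X Y : LieGrp) : LieGrp where
  a := 0
  b := 0
  c := 0
  d := 0
  x := X.a * Y.c - X.c * Y.a
  y := X.a * Y.d - X.d * Y.a
  z := X.b * Y.c - X.c * Y.b
  w := X.b * Y.d - X.d * Y.b
  p := X.c * Y.d - X.d * Y.c - X.x * Y.a - X.w * Y.b + Y.x * X.a + Y.w * X.b
  q := X.x * Y.b + X.z * Y.a + X.w * Y.d - Y.x * X.b - Y.z * X.a - Y.w * X.d
  r := X.a * Y.b - X.b * Y.a + X.x * Y.c + X.w * Y.c + X.z * Y.d
    - Y.x * X.c - Y.w * X.c - Y.z * X.d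
  s := X.x * Y.d + X.y * Y.c + X.y * Y.b + X.w * Y.a
    - Y.x * X.d - Y.y * X.c - Y.y * X.b - Y.w * X.a
  t := X.z * Y.c - X.y * Y.a - Y.z * X.c + Y.y * X.a

/-- The linear combination `X + Y + α Z + β W`. -/
def comb (X Y : LieGrp) (α : ℚ) (Z : LieGrp) (β : ℚ) (W : LieGrp) : LieGrp where
  a := X.a + Y.a + α * Z.a + β * W.a
  b := X.b + Y.b + α * Z.b + β * W.b
  c := X.c + Y.c + α * Z.c + β * W.c
  d := X.d + Y.d + α * Z.d + β * W.d
  x := X.x + Y.x + α * Z.x + β * W.x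
  y := X.y + Y.y + α * Z.y + β * W.y
  z := X.z + Y.z + α * Z.z + β * W.z
  w := X.w + Y.w + α * Z.w + β * W.w
  p := X.p + Y.p + α * Z.p + β * W.p
  q := X.q + Y.q + α * Z.q + β * W.q
  r := X.r + Y.r + α * Z.r + β * W.r
  s := X.s + Y.s + α * Z.s + β * W.s
  t := X.t + Y.t + α * Z.t + β * W.t

instance : Zero LieGrp := ⟨⟨0, 0, 0, 0, 0, 0, 0, 0, 0, 0, 0, 0, 0⟩⟩

instance : SMul ℚ LieGrp :=
  ⟨fun α X => ⟨α * X.a, α * X.b, α * X.c, α * X.d, α * X.x, α * X.y, α * X.z, α * X.w,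
    α * X.p, α * X.q, α * X.r, α * X.s, α * X.t⟩⟩

theorem zero_def : (0 : LieGrp) = ⟨0, 0, 0, 0, 0, 0, 0, 0, 0, 0, 0, 0, 0⟩ := rfl

theorem smul_def (α : ℚ) (X : LieGrp) : α • X = ⟨α * X.a, α * X.b, α * X.c, α * X.d, α * X.x,
    α * X.y, α * X.z, α * X.w, α * X.p, α * X.q, α * X.r, α * X.s, α * X.t⟩ := rfl

/-- The Baker–Campbell–Hausdorff product
`X + Y + [X, Y] / 2 + [X - Y, [X, Y]] / 12`. -/
instance : Mul LieGrp :=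
  ⟨fun X Y => comb X Y (1 / 2) (br X Y) (1 / 12) (br (comb X ((-1 : ℚ) • Y) 0 0 0 0) (br X Y))⟩

instance : One LieGrp := ⟨0⟩

instance : Inv LieGrp := ⟨fun X => (-1 : ℚ) • X⟩

theorem mul_def (X Y : LieGrp) : X * Y =
    comb X Y (1 / 2) (br X Y) (1 / 12) (br (comb X ((-1 : ℚ) • Y) 0 0 0 0) (br X Y)) := rfl

theorem one_def : (1 : LieGrp) = ⟨0, 0, 0, 0, 0, 0, 0, 0, 0, 0, 0, 0, 0⟩ := rfl

theorem inv_def (X : LieGrp) : X⁻¹ = (-1 : ℚ) • X := rfl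

instance : Group LieGrp :=
  Group.ofLeftAxioms
    (fun X Y Z => by
      simp only [mul_def, comb, br, smul_def, zero_def]
      ext <;> ring)
    (fun X => by
      simp only [mul_def, one_def, comb, br, smul_def, zero_def]
      ext <;> ring)
    (fun X => by
      simp only [mul_def, one_def, inv_def, comb, br, smul_def, zero_def]
      ext <;> ring)

/-- The group commutator is `[X, Y] + [[X, Y], X + Y] / 2`. -/
theorem cmt_eq (X Y : LieGrp) :
    cmt X Y = comb (br X Y) 0 (1 / 2) (br (br X Y) (comb X Y 0 0 0 0)) 0 0 := by
  simp only [cmt, mul_def, inv_def, comb, br, smul_def, zero_def]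
  ext <;> ring

theorem pow_eq (X : LieGrp) (i : ℕ) : X ^ i = (i : ℚ) • X := by
  induction i with
  | zero => simp [one_def, smul_def]
  | succ i ih =>
    rw [pow_succ, ih]
    simp only [mul_def, comb, br, smul_def, zero_def, Nat.cast_add, Nat.cast_one]
    ext <;> ring

/-- The homomorphism from `N_{3,4}` that sends the generators to the basis in degree one. -/
def ofN34 : N34 →* LieGrp :=
  PresentedGroup.toGroup (rels := N34Rels)
    (f := ![⟨1, 0, 0, 0, 0, 0, 0, 0, 0, 0, 0, 0, 0⟩, ⟨0, 1, 0, 0, 0, 0, 0, 0, 0, 0, 0, 0, 0⟩,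
      ⟨0, 0, 1, 0, 0, 0, 0, 0, 0, 0, 0, 0, 0⟩, ⟨0, 0, 0, 1, 0, 0, 0, 0, 0, 0, 0, 0, 0⟩]) <| by
    refine (relations_iff _ (FreeGroup.lift_apply_of) (FreeGroup.lift_apply_of)
      (FreeGroup.lift_apply_of) (FreeGroup.lift_apply_of)).2 ?_
    simp only [Matrix.cons_val, cmt_eq, comb, br, zero_def, one_def, mul_def, smul_def]
    norm_num

theorem ofN34_ga : ofN34 ga = ⟨1, 0, 0, 0, 0, 0, 0, 0, 0, 0, 0, 0, 0⟩ := PresentedGroup.toGroup.of _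
theorem ofN34_gb : ofN34 gb = ⟨0, 1, 0, 0, 0, 0, 0, 0, 0, 0, 0, 0, 0⟩ := PresentedGroup.toGroup.of _
theorem ofN34_gc : ofN34 gc = ⟨0, 0, 1, 0, 0, 0, 0, 0, 0, 0, 0, 0, 0⟩ := PresentedGroup.toGroup.of _
theorem ofN34_gd : ofN34 gd = ⟨0, 0, 0, 1, 0, 0, 0, 0, 0, 0, 0, 0, 0⟩ := PresentedGroup.toGroup.of _

/-- The degree-one part of an element. -/
def deg1 : LieGrp →* Multiplicative (Fin 4 → ℚ) where
  toFun X := Multiplicative.ofAdd ![X.a, X.b, X.c, X.d]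
  map_one' := by
    rw [one_def, ← ofAdd_zero]
    congr 1
    ext i; fin_cases i <;> rfl
  map_mul' X Y := by
    rw [← ofAdd_add]
    congr 1
    ext i; fin_cases i <;> simp [mul_def, comb, br, smul_def, zero_def]

/-- Congruences modulo the commutator subgroup are read off in degree one. -/
theorem deg1_of_mem {u : N34} {e₀ e₁ e₂ e₃ : ℤ}
    (h : u * (ga ^ e₀ * gb ^ e₁ * gc ^ e₂ * gd ^ e₃)⁻¹ ∈ commutator N34) :
    (ofN34 u).a = e₀ ∧ (ofN34 u).b = e₁ ∧ (ofN34 u).c = e₂ ∧ (ofN34 u).d = e₃ := by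
  have h1 : (deg1.comp ofN34) (u * (ga ^ e₀ * gb ^ e₁ * gc ^ e₂ * gd ^ e₃)⁻¹) = 1 :=
    Abelianization.commutator_subset_ker _ h
  rw [map_mul, map_inv, mul_inv_eq_one] at h1
  simp only [map_mul, map_zpow, MonoidHom.comp_apply, ofN34_ga, ofN34_gb, ofN34_gc, ofN34_gd] at h1
  have h2 := congrArg Multiplicative.toAdd h1
  simp only [deg1, MonoidHom.coe_mk, OneHom.coe_mk, toAdd_mul, toAdd_zpow, toAdd_ofAdd] at h2
  exact ⟨by simpa using congrFun h2 0, by simpa using congrFun h2 1,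
    by simpa using congrFun h2 2, by simpa using congrFun h2 3⟩

end LieGrp

/-! ### Solving the polynomial identities -/

/-- If columns `u, v` of a matrix with two rows are independent and column `w` is proportional to
both of them, then `w` vanishes. -/
theorem minor_zero {u v w u₂ v₂ w₂ : ℚ} (h : u * v₂ - v * u₂ ≠ 0) (h1 : u * w₂ - w * u₂ = 0)
    (h2 : v * w₂ - w * v₂ = 0) : w = 0 ∧ w₂ = 0 := by
  constructor
  · refine (mul_eq_zero.1 (?_ : (u * v₂ - v * u₂) * w = 0)).resolve_left h
    linear_combination v * h1 - u * h2
  · refine (mul_eq_zero.1 (?_ : (u * v₂ - v * u₂) * w₂ = 0)).resolve_left h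
    linear_combination v₂ * h1 - u₂ * h2

/-- Laplace expansion along the first two rows. -/
theorem det_four (M : Matrix (Fin 4) (Fin 4) ℚ) : M.det =
    (M 0 0 * M 1 1 - M 0 1 * M 1 0) * (M 2 2 * M 3 3 - M 2 3 * M 3 2)
    - (M 0 0 * M 1 2 - M 0 2 * M 1 0) * (M 2 1 * M 3 3 - M 2 3 * M 3 1)
    + (M 0 0 * M 1 3 - M 0 3 * M 1 0) * (M 2 1 * M 3 2 - M 2 2 * M 3 1)
    + (M 0 1 * M 1 2 - M 0 2 * M 1 1) * (M 2 0 * M 3 3 - M 2 3 * M 3 0)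
    - (M 0 1 * M 1 3 - M 0 3 * M 1 1) * (M 2 0 * M 3 2 - M 2 2 * M 3 0)
    + (M 0 2 * M 1 3 - M 0 3 * M 1 2) * (M 2 0 * M 3 1 - M 2 1 * M 3 0) := by
  rw [Matrix.det_succ_row_zero]
  simp [Fin.sum_univ_four, Matrix.det_fin_three, Fin.succAbove]
  ring

/-- Elements of `LieGrp` that satisfy the relations of `aᵐ, bⁿ, cᵏ, dʲ` and whose degree-one
parts are linearly independent have the same degree-one parts as `aᵐ, bⁿ, cᵏ, dʲ`. -/
theorem LieGrp.rigid {A B C D : LieGrp} {m n k j : ℕ} (hm : 0 < m) (hn : 0 < n) (hk : 0 < k) (hj : 0 < j)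
    (h1 : cmt A B ^ (k * k) = cmt (cmt A C) C ^ n)
    (h2 : cmt C D ^ (m * m) = cmt A (cmt A C) ^ j)
    (h3 : cmt (cmt A D) D = 1) (h4 : cmt B (cmt B C) = 1)
    (h5 : cmt (cmt A C) C ^ (n * j) = cmt (cmt B D) C ^ (m * k))
    (h6 : cmt A (cmt A C) ^ (n * n * j) = cmt B (cmt B D) ^ (m * m * k))
    (h7 : cmt A (cmt A D) ^ (n * k * k) = cmt (cmt B C) C ^ (m * m * j))
    (hdet : (!![A.a, A.b, A.c, A.d; B.a, B.b, B.c, B.d; C.a, C.b, C.c, C.d;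
      D.a, D.b, D.c, D.d]).det ≠ 0) :
    !![A.a, A.b, A.c, A.d; B.a, B.b, B.c, B.d; C.a, C.b, C.c, C.d; D.a, D.b, D.c, D.d] =
      !![(m : ℚ), 0, 0, 0; 0, (n : ℚ), 0, 0; 0, 0, (k : ℚ), 0; 0, 0, 0, (j : ℚ)] := by
  have hm' : (m : ℚ) ≠ 0 := by positivity
  have hn' : (n : ℚ) ≠ 0 := by positivity
  have hk' : (k : ℚ) ≠ 0 := by positivity
  have hj' : (j : ℚ) ≠ 0 := by positivity
  simp only [LieGrp.pow_eq, LieGrp.cmt_eq,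
    LieGrp.comb, LieGrp.br, LieGrp.smul_def, LieGrp.zero_def, LieGrp.one_def, LieGrp.mk.injEq,
    mul_zero, zero_mul, add_zero, zero_add, sub_zero, true_and, mul_eq_zero,
    Nat.cast_mul, hk', hm', or_self, false_or] at h1 h2 h3 h4 h5 h6 h7
  -- `x1` is the `x`-coordinate of the first relation, and so on
  obtain ⟨x1, y1, z1, w1, -, -, r1, -, -⟩ := h1
  obtain ⟨x2, y2, z2, w2, -⟩ := h2
  obtain ⟨p3, q3, r3, s3, t3⟩ := h3
  obtain ⟨p4, q4, r4, s4, t4⟩ := h4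
  obtain ⟨-, -, r5, s5, -⟩ := h5
  obtain ⟨p6, -⟩ := h6
  obtain ⟨-, -, -, -, t7⟩ := h7
  rw [det_four] at hdet
  simp only [Matrix.of_apply, Matrix.cons_val, x1, y1, z1, w1, zero_mul, sub_zero, add_zero] at hdet
  generalize A.a = a1, A.b = b1, A.c = c1, A.d = d1, A.x = A₁, A.y = A₂, A.z = A₃, A.w = A₄,
    B.a = a2, B.b = b2, B.c = c2, B.d = d2, B.x = B₁, B.y = B₂, B.z = B₃, B.w = B₄,
    C.a = a3, C.b = b3, C.c = c3, C.d = d3, D.a = a4, D.b = b4, D.c = c4, D.d = d4 at *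
  by_cases h12 : a1 * b2 - b1 * a2 = 0
  -- block antidiagonal: the first two rows lie in the span of `c, d`, the others in that of `a, b`
  · exfalso
    rw [h12, zero_mul, zero_add] at hdet
    have m12 := left_ne_zero_of_mul hdet
    have m34 := right_ne_zero_of_mul hdet
    obtain ⟨rfl, rfl⟩ := minor_zero (w := a1) (w₂ := a2) m12 (by linear_combination -x1)
      (by linear_combination -y1)
    obtain ⟨rfl, rfl⟩ := minor_zero (w := b1) (w₂ := b2) m12 (by linear_combination -z1)
      (by linear_combination -w1)
    obtain ⟨rfl, rfl⟩ := minor_zero (w := c3) (w₂ := c4) m34 x2 z2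
    obtain ⟨rfl, rfl⟩ := minor_zero (w := d3) (w₂ := d4) m34 y2 w2
    simp only [mul_zero, zero_mul, zero_sub, sub_zero, add_zero, zero_add] at *
    have ha4 : a4 = 0 := by
      by_contra h
      have hd1 : d1 = 0 := by simpa [h] using t3
      subst hd1
      have hc1 : c1 = 0 := by simpa [h] using p3
      exact m12 (by rw [hc1]; ring)
    subst ha4
    have hb4 : b4 ≠ 0 := by rintro rfl; exact m34 (by ring)
    have ha3 : a3 ≠ 0 := by rintro rfl; exact m34 (by ring)
    have hd1 : d1 = 0 := by simpa [hb4] using p3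
    subst hd1
    have hd2 : d2 ≠ 0 := by rintro rfl; exact m12 (by ring)
    have hb3 : b3 = 0 := by simpa [hd2] using q4
    subst hb3
    simp [hm', hk', ha3, hb4, hd2] at s5
  -- block diagonal
  · obtain ⟨rfl, rfl⟩ := minor_zero (w := c1) (w₂ := c2) h12 x1 z1
    obtain ⟨rfl, rfl⟩ := minor_zero (w := d1) (w₂ := d2) h12 y1 w1
    have m34 : c3 * d4 - d3 * c4 ≠ 0 := by
      intro h0
      simp [h0] at hdet
    obtain ⟨rfl, rfl⟩ := minor_zero (w := a3) (w₂ := a4) m34 (by linear_combination -x2)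
      (by linear_combination -y2)
    obtain ⟨rfl, rfl⟩ := minor_zero (w := b3) (w₂ := b4) m34 (by linear_combination -z2)
      (by linear_combination -w2)
    simp only [mul_zero, zero_mul, zero_sub, sub_zero, add_zero, zero_add] at *
    have hb1 : b1 = 0 := by
      by_contra h
      have hd4 : d4 = 0 := by simpa [h] using q3
      have hc4 : c4 = 0 := by simpa [h] using t3
      exact m34 (by rw [hd4, hc4]; ring)
    subst hb1
    have ha1 : a1 ≠ 0 := by rintro rfl; exact h12 (by ring)
    have hb2 : b2 ≠ 0 := by rintro rfl; exact h12 (by ring)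
    have hc4 : c4 = 0 := by simpa [ha1] using r3
    subst hc4
    have hc3 : c3 ≠ 0 := by rintro rfl; exact m34 (by ring)
    have ha2 : a2 = 0 := by
      have h : b2 * c3 * a2 = 0 := by linear_combination -q4 / 2
      simpa [hb2, hc3] using h
    subst ha2
    have hd3 : d3 = 0 := by simpa [hb2] using p4
    subst hd3
    -- the diagonal entries are determined by the relations of degree three
    have e1 : (n : ℚ) * a1 = m * b2 := by
      refine mul_left_cancel₀ (mul_ne_zero (mul_ne_zero (mul_ne_zero hn' hj') ha1) hc3) ?_
      refine mul_right_cancel₀ hc3 ?_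
      linear_combination c3 * p6 - m * b2 * r5
    have e2 : (k : ℚ) * d4 = j * c3 := by
      refine mul_left_cancel₀ (mul_ne_zero (mul_ne_zero hn' ha1) hc3) ?_
      linear_combination -r5 + k * d4 * c3 * e1
    have e3 : (k : ℚ) * k * a1 = m * c3 * c3 := by
      refine mul_left_cancel₀ (mul_ne_zero hn' ha1) ?_
      linear_combination m * r1 + k * k * a1 * e1
    have hd4 : d4 = j := by
      refine mul_left_cancel₀ (mul_ne_zero (mul_ne_zero (mul_ne_zero hn' hk') hk') ha1) ?_
      refine mul_left_cancel₀ ha1 ?_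
      linear_combination t7 - m * j * c3 * c3 * e1 - j * n * a1 * e3
    have hc3' : c3 = k := by
      refine mul_left_cancel₀ hj' ?_
      linear_combination -e2 + k * hd4
    have ha1' : a1 = m := by
      refine mul_left_cancel₀ (mul_ne_zero hk' hk') ?_
      linear_combination e3 + m * (c3 + k) * hc3'
    have hb2' : b2 = n := by
      refine mul_left_cancel₀ hm' ?_
      linear_combination -e1 + n * ha1'
    rw [ha1', hb2', hc3', hd4]

/-! ### The exponent matrix -/

/-- Let `f : H → N_{3,4}` be a virtual endomorphism of `G = N_{3,4}` and let `Nf` be the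
`4 × 4` integer exponent matrix of `f` (recording the images of `aᵐ, bⁿ, cᵏ, dʲ` modulo
`G'`). If `det Nf ≠ 0`, then `f(aᵐ) ≡ aᵐ`, `f(bⁿ) ≡ bⁿ`, `f(cᵏ) ≡ cᵏ`, `f(dʲ) ≡ dʲ`
modulo `G'`; equivalently, `Nf = diag(m, n, k, j)`. -/
theorem N34_exponent_matrix_diagonal_of_det_ne_zero
    (H : Subgroup N34) (hH : H.FiniteIndex) (f : ↥H →* N34)
    (m n k j : ℕ) (hm : 0 < m) (hn : 0 < n) (hk : 0 < k) (hj : 0 < j)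
    (ham : ga ^ m ∈ H) (hbn : gb ^ n ∈ H) (hck : gc ^ k ∈ H) (hdj : gd ^ j ∈ H)
    (Nf : Matrix (Fin 4) (Fin 4) ℤ)
    (hfa : f ⟨ga ^ m, ham⟩ *
      (ga ^ Nf 0 0 * gb ^ Nf 0 1 * gc ^ Nf 0 2 * gd ^ Nf 0 3)⁻¹ ∈ commutator N34)
    (hfb : f ⟨gb ^ n, hbn⟩ *
      (ga ^ Nf 1 0 * gb ^ Nf 1 1 * gc ^ Nf 1 2 * gd ^ Nf 1 3)⁻¹ ∈ commutator N34)
    (hfc : f ⟨gc ^ k, hck⟩ *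
      (ga ^ Nf 2 0 * gb ^ Nf 2 1 * gc ^ Nf 2 2 * gd ^ Nf 2 3)⁻¹ ∈ commutator N34)
    (hfd : f ⟨gd ^ j, hdj⟩ *
      (ga ^ Nf 3 0 * gb ^ Nf 3 1 * gc ^ Nf 3 2 * gd ^ Nf 3 3)⁻¹ ∈ commutator N34)
    (hdet : Nf.det ≠ 0) :
    (f ⟨ga ^ m, ham⟩ * (ga ^ m)⁻¹ ∈ commutator N34 ∧
      f ⟨gb ^ n, hbn⟩ * (gb ^ n)⁻¹ ∈ commutator N34 ∧
      f ⟨gc ^ k, hck⟩ * (gc ^ k)⁻¹ ∈ commutator N34 ∧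
      f ⟨gd ^ j, hdj⟩ * (gd ^ j)⁻¹ ∈ commutator N34) ∧
    Nf = Matrix.diagonal ![(m : ℤ), (n : ℤ), (k : ℤ), (j : ℤ)] := by
  obtain ⟨p1, p2, p3, p4, p5, p6, p7⟩ := N34_power_relations m n k j
  set A : ↥H := ⟨ga ^ m, ham⟩ with hA
  set B : ↥H := ⟨gb ^ n, hbn⟩ with hB
  set C : ↥H := ⟨gc ^ k, hck⟩ with hC
  set D : ↥H := ⟨gd ^ j, hdj⟩ with hD
  let F : ↥H →* LieGrp := LieGrp.ofN34.comp f
  have q1 : cmt A B ^ (k * k) = cmt (cmt A C) C ^ n := Subtype.ext p1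
  have q2 : cmt C D ^ (m * m) = cmt A (cmt A C) ^ j := Subtype.ext p2
  have q3 : cmt (cmt A D) D = 1 := Subtype.ext p3
  have q4 : cmt B (cmt B C) = 1 := Subtype.ext p4
  have q5 : cmt (cmt A C) C ^ (n * j) = cmt (cmt B D) C ^ (m * k) := Subtype.ext p5
  have q6 : cmt A (cmt A C) ^ (n * n * j) = cmt B (cmt B D) ^ (m * m * k) := Subtype.ext p6
  have q7 : cmt A (cmt A D) ^ (n * k * k) = cmt (cmt B C) C ^ (m * m * j) := Subtype.ext p7
  replace q1 := congrArg F q1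
  replace q2 := congrArg F q2
  replace q3 := congrArg F q3
  replace q4 := congrArg F q4
  replace q5 := congrArg F q5
  replace q6 := congrArg F q6
  replace q7 := congrArg F q7
  simp only [map_pow, map_cmt, map_one] at q1 q2 q3 q4 q5 q6 q7
  obtain ⟨a0, a1, a2, a3⟩ := LieGrp.deg1_of_mem hfa
  obtain ⟨b0, b1, b2, b3⟩ := LieGrp.deg1_of_mem hfb
  obtain ⟨c0, c1, c2, c3⟩ := LieGrp.deg1_of_mem hfc
  obtain ⟨d0, d1, d2, d3⟩ := LieGrp.deg1_of_mem hfd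
  -- over `ℚ`, the matrix `Nf` is the matrix of degree-one parts of the images
  have hM : !![(F A).a, (F A).b, (F A).c, (F A).d; (F B).a, (F B).b, (F B).c, (F B).d;
      (F C).a, (F C).b, (F C).c, (F C).d; (F D).a, (F D).b, (F D).c, (F D).d] =
      Nf.map (Int.castRingHom ℚ) := by
    ext i l
    fin_cases i <;> fin_cases l <;>
      simp [F, a0, a1, a2, a3, b0, b1, b2, b3, c0, c1, c2, c3, d0, d1, d2, d3]
  have hdiag := LieGrp.rigid hm hn hk hj q1 q2 q3 q4 q5 q6 q7 (by
    rw [hM, ← RingHom.mapMatrix_apply, ← RingHom.map_det]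
    simpa using hdet)
  have hN : Nf = Matrix.diagonal ![(m : ℤ), (n : ℤ), (k : ℤ), (j : ℤ)] := by
    refine Matrix.map_injective (f := Int.castRingHom ℚ) (RingHom.injective_int _) ?_
    beta_reduce
    rw [← hM, hdiag]
    ext i l
    fin_cases i <;> fin_cases l <;> simp
  refine ⟨?_, hN⟩
  rw [hN] at hfa hfb hfc hfd
  refine ⟨?_, ?_, ?_, ?_⟩
  · simpa using hfa
  · simpa using hfb
  · simpa using hfc
  · simpa using hfd
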